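/- Let M = P + εD ∈ 𝔻ℍ[t] be a monic motion polynomial and let G ∈ ℝ[t] be a monic real polynomial such that G divides ν(M) = M·M* and mrpf(G, P) = 1. Then there exist motion polynomials M₁, M₂ ∈ 𝔻ℍ[t] such that M₁ admits a factorization into monic linear motion polynomial factors, G = M₁·M₁*, and M = M₁·M₂. -/

import Mathlib

open Polynomial DualNumber TrivSqZeroExt

noncomputable section

/-- The real quaternions. -/
abbrev Hq : Type := Quaternion ℝ

/-- The dual quaternions. -/
abbrev DHq : Type := DualNumber Hq

/-- Conjugation of a dual quaternion: `(p + ε d)* = p* + ε d*`. -/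
instance : Star DHq := ⟨fun x => inl (star x.fst) + inr (star x.snd)⟩

/-- Coefficient-wise (quaternion) conjugation of a polynomial. -/
def cstar {R : Type*} [Semiring R] [Star R] (A : R[X]) : R[X] :=
  A.sum fun n a => Polynomial.C (star a) * Polynomial.X ^ n

/-- The embedding `ℝ[t] → ℍ[t]`. -/
def qPoly (f : ℝ[X]) : Hq[X] := f.map (algebraMap ℝ Hq)

/-- The embedding `ℍ[t] → 𝔻ℍ[t]` (primal part). -/
def dhQ (P : Hq[X]) : DHq[X] := P.map (inlHom Hq Hq)

/-- The embedding `ℝ[t] → 𝔻ℍ[t]`. -/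
def dPoly (f : ℝ[X]) : DHq[X] := dhQ (qPoly f)

/-- The dual quaternion polynomial `P + ε D` with primal part `P` and dual part `D`. -/
def mp (P D : Hq[X]) : DHq[X] := dhQ P + Polynomial.C ε * dhQ D

/-- The primal part of a dual quaternion polynomial. -/
def primal (A : DHq[X]) : Hq[X] := A.map (fstHom ℝ Hq Hq).toRingHom

/-- A motion polynomial: a dual quaternion polynomial whose norm polynomial
`ν(M) = M·M*` is a nonzero real polynomial. -/
def IsMotion (M : DHq[X]) : Prop := ∃ f : ℝ[X], f ≠ 0 ∧ M * cstar M = dPoly f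

/-- A real polynomial divides a quaternion polynomial. -/
def RDvdQ (f : ℝ[X]) (A : Hq[X]) : Prop := ∃ B : Hq[X], A = qPoly f * B

/-- A real polynomial divides a dual quaternion polynomial. -/
def RDvdD (f : ℝ[X]) (A : DHq[X]) : Prop := ∃ B : DHq[X], A = dPoly f * B

/-- `g` is the greatest common monic real polynomial divisor of a quaternion polynomial `A`
(with itself), i.e. `g = mrpf A`. -/
def IsMrpfQ (g : ℝ[X]) (A : Hq[X]) : Prop :=
  g.Monic ∧ RDvdQ g A ∧ ∀ f : ℝ[X], f.Monic → RDvdQ f A → f ∣ g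

/-- `g` is the greatest common monic real polynomial divisor of `c ∈ ℝ[t]` and a quaternion
polynomial `A`, i.e. `g = mrpf(c, A)`. -/
def IsMrpf2 (g : ℝ[X]) (c : ℝ[X]) (A : Hq[X]) : Prop :=
  g.Monic ∧ g ∣ c ∧ RDvdQ g A ∧
    ∀ f : ℝ[X], f.Monic → f ∣ c → RDvdQ f A → f ∣ g

/-- `g` is the greatest common monic real polynomial divisor of `c ∈ ℝ[t]` and two quaternion
polynomials `A` and `B`, i.e. `g = mrpf(c, A, B)`. -/
def IsMrpf3 (g : ℝ[X]) (c : ℝ[X]) (A B : Hq[X]) : Prop :=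
  g.Monic ∧ g ∣ c ∧ RDvdQ g A ∧ RDvdQ g B ∧
    ∀ f : ℝ[X], f.Monic → f ∣ c → RDvdQ f A → RDvdQ f B → f ∣ g

/-- A quaternion polynomial is reduced: `mrpf = 1`, i.e. it has only constant real
polynomial factors. -/
def ReducedQ (A : Hq[X]) : Prop := ∀ f : ℝ[X], f.Monic → RDvdQ f A → f = 1

/-- A dual quaternion polynomial is reduced: `mrpf = 1`. -/
def ReducedD (A : DHq[X]) : Prop := ∀ f : ℝ[X], f.Monic → RDvdD f A → f = 1

/-- Boundedness of a (monic reduced) motion polynomial: `mrpf` of its primal part has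
no real root, equivalently no linear real polynomial `t - a` divides the primal part. -/
def BoundedD (M : DHq[X]) : Prop :=
  ∀ a : ℝ, ¬ RDvdQ (Polynomial.X - Polynomial.C a) (primal M)

/-- A generic motion polynomial: monic, a motion polynomial, with `mrpf` of the primal
part equal to `1`. -/
def GenericD (M : DHq[X]) : Prop :=
  M.Monic ∧ IsMotion M ∧ ReducedQ (primal M)

/-- The monic linear dual quaternion polynomial `t - p - ε d`. -/
def lin (p d : Hq) : DHq[X] := mp (Polynomial.X - Polynomial.C p) (-Polynomial.C d)

/-- `M` admits a factorization into monic linear motion polynomial factors. -/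
def HasLinFact (M : DHq[X]) : Prop :=
  ∃ L : List DHq, (∀ h ∈ L, IsMotion (Polynomial.X - Polynomial.C h)) ∧
    M = (L.map fun h => Polynomial.X - Polynomial.C h).prod

end
/-!
Self-adjoint dual quaternions are central, so `ν(A) = A A*` is a central polynomial and `ν` is
multiplicative. If `F` is a monic irreducible real factor of `G` (of degree at most two), the
remainder `R` of `M` on division by `F` satisfies `F ∣ ν(R)`, and its primal part is nonzero because
`F ∤ P`. Comparing degrees in the domain `ℍ[t]` forces `deg F = 2` and makes the linear coefficient
of `R` invertible, so `R = (t - h) a` with `ν(t - h) = F`; then `t - h` also divides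
`F Q = (t - h) (t - h)* Q`, hence `M`. Splitting off one irreducible factor of `G` after the other
gives `M₁`.
-/

section Polynomial

theorem commute_of_forall_commute_coeff {R : Type*} [Semiring R] {A B : R[X]}
    (h : ∀ m n, Commute (A.coeff m) (B.coeff n)) : Commute A B := by
  ext n
  rw [coeff_mul, coeff_mul, ← Finset.Nat.sum_antidiagonal_swap]
  exact Finset.sum_congr rfl fun p _ => h p.2 p.1

theorem commute_map_algebraMap {S R : Type*} [CommSemiring S] [Semiring R] [Algebra S R]
    (f : S[X]) (A : R[X]) : Commute (f.map (algebraMap S R)) A :=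
  commute_of_forall_commute_coeff fun m n => by
    rw [coeff_map]
    exact Algebra.commute_algebraMap_left _ _

theorem eq_of_monic_of_dvd_of_natDegree_eq {R : Type*} [Semiring R] {A B : R[X]}
    (hA : A.Monic) (hB : B.Monic) (hdvd : A ∣ B) (hdeg : A.natDegree = B.natDegree) : A = B := by
  obtain ⟨Q, rfl⟩ := hdvd
  have hQ : Q.Monic := hA.of_mul_monic_left hB
  rw [hA.natDegree_mul hQ, left_eq_add, hQ.natDegree_eq_zero] at hdeg
  rw [hdeg, mul_one]

theorem exists_eq_X_sub_C_mul_C {R : Type*} [Ring R] {A : R[X]} (hdeg : A.natDegree ≤ 1)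
    (hu : IsUnit (A.coeff 1)) : ∃ h : R, A = (X - C h) * C (A.coeff 1) := by
  obtain ⟨u, hu⟩ := hu
  refine ⟨-(A.coeff 0 * ↑u⁻¹), ?_⟩
  rw [C_neg, sub_neg_eq_add, add_mul, X_mul_C, ← C_mul, mul_assoc, ← hu, Units.inv_mul, mul_one, hu]
  exact eq_X_add_C_of_natDegree_le_one hdeg

end Polynomial

section

variable {R : Type*} [Semiring R] [StarAddMonoid R]

theorem coeff_cstar (A : R[X]) (n : ℕ) : (cstar A).coeff n = star (A.coeff n) := by
  rw [cstar, Polynomial.sum_def, finsetSum_coeff]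
  simp +contextual [coeff_X_pow]

theorem cstar_add (A B : R[X]) : cstar (A + B) = cstar A + cstar B := by
  ext1 n
  simp [coeff_cstar]

theorem cstar_cstar (A : R[X]) : cstar (cstar A) = A := by
  ext1 n
  simp [coeff_cstar]

theorem cstar_C (a : R) : cstar (C a) = C (star a) := by
  ext1 n
  rw [coeff_cstar, coeff_C, coeff_C]
  split_ifs <;> simp

theorem natDegree_cstar (A : R[X]) : (cstar A).natDegree = A.natDegree := by
  have cstar_le (B : R[X]) : (cstar B).natDegree ≤ B.natDegree :=
    natDegree_le_iff_coeff_eq_zero.mpr fun n hn => by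
      rw [coeff_cstar, coeff_eq_zero_of_natDegree_lt hn, star_zero]
  exact (cstar_le A).antisymm (by simpa only [cstar_cstar] using cstar_le (cstar A))

theorem cstar_ne_zero {A : R[X]} (hA : A ≠ 0) : cstar A ≠ 0 := by
  contrapose! hA
  rw [← cstar_cstar A, hA, ← C_0, cstar_C, star_zero]

theorem commute_of_cstar_eq_self (hR : ∀ x : R, IsSelfAdjoint x → x ∈ Set.center R) {A : R[X]}
    (hA : cstar A = A) (B : R[X]) : Commute A B :=
  commute_of_forall_commute_coeff fun m n => by
    have hm : IsSelfAdjoint (A.coeff m) := by rw [IsSelfAdjoint, ← coeff_cstar, hA]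
    exact (hR _ hm).comm _

end

section Conjugation

variable {R : Type*} [Semiring R] [StarRing R]

theorem cstar_mul (A B : R[X]) : cstar (A * B) = cstar B * cstar A := by
  ext1 n
  rw [coeff_cstar, coeff_mul, coeff_mul, star_sum, ← Finset.Nat.sum_antidiagonal_swap]
  simp [coeff_cstar]

theorem cstar_one : cstar (1 : R[X]) = 1 := by
  rw [← C_1, cstar_C, star_one]

theorem monic_cstar {A : R[X]} (hA : A.Monic) : (cstar A).Monic := by
  rw [Monic, leadingCoeff, natDegree_cstar, coeff_cstar, hA.coeff_natDegree, star_one]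

end Conjugation

/-- The norm polynomial `ν(A) = A·A*`, over any coefficient ring with a conjugation. It is not
bundled as a real polynomial, which it is only for motion polynomials. -/
noncomputable def normPoly {R : Type*} [Semiring R] [Star R] (A : R[X]) : R[X] := A * cstar A

section

variable {R : Type*} [Semiring R] [StarAddMonoid R]

theorem normPoly_C (a : R) : normPoly (C a) = C (a * star a) := by
  rw [normPoly, cstar_C, C_mul]

theorem natDegree_le_of_dvd_normPoly [NoZeroDivisors R] {A B : R[X]} (hA : A ≠ 0)
    (hdvd : B ∣ normPoly A) : B.natDegree ≤ 2 * A.natDegree :=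
  calc B.natDegree
    _ ≤ (normPoly A).natDegree := natDegree_le_of_dvd hdvd (mul_ne_zero hA (cstar_ne_zero hA))
    _ = 2 * A.natDegree := by
      rw [normPoly, natDegree_mul hA (cstar_ne_zero hA), natDegree_cstar, two_mul]

end

section NormPolynomial

variable {R : Type*} [Semiring R] [StarRing R]

theorem cstar_normPoly (A : R[X]) : cstar (normPoly A) = normPoly A := by
  rw [normPoly, cstar_mul, cstar_cstar]

theorem normPoly_one : normPoly (1 : R[X]) = 1 := by
  rw [normPoly, cstar_one, mul_one]

theorem monic_normPoly {A : R[X]} (hA : A.Monic) : (normPoly A).Monic :=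
  hA.mul (monic_cstar hA)

theorem natDegree_normPoly {A : R[X]} (hA : A.Monic) :
    (normPoly A).natDegree = 2 * A.natDegree := by
  rw [normPoly, hA.natDegree_mul (monic_cstar hA), natDegree_cstar, two_mul]

theorem normPoly_mul (hR : ∀ x : R, IsSelfAdjoint x → x ∈ Set.center R) (A B : R[X]) :
    normPoly (A * B) = normPoly A * normPoly B := by
  have hB : Commute (normPoly B) (cstar A) := commute_of_cstar_eq_self hR (cstar_normPoly B) _
  calc normPoly (A * B)
    _ = A * (normPoly B * cstar A) := by simp only [normPoly, cstar_mul, mul_assoc]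
    _ = normPoly A * normPoly B := by rw [hB.eq, ← mul_assoc, ← normPoly]

end NormPolynomial

theorem dvd_normPoly_add_mul_iff {R : Type*} [Ring R] [StarRing R]
    (hR : ∀ x : R, IsSelfAdjoint x → x ∈ Set.center R) {F : R[X]} (hF : cstar F = F) (A Q : R[X]) :
    F ∣ normPoly (A + F * Q) ↔ F ∣ normPoly A := by
  have hcomm (B : R[X]) : Commute F B := commute_of_cstar_eq_self hR hF B
  have hexpand : normPoly (A + F * Q) =
      normPoly A + F * (A * cstar Q + Q * cstar (A + F * Q)) := by
    simp only [normPoly, cstar_add, cstar_mul, hF, mul_add, add_mul, ← mul_assoc, (hcomm A).eq]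
    rw [mul_assoc A (cstar Q), ← (hcomm (cstar Q)).eq, ← mul_assoc]
    abel
  rw [hexpand]
  exact dvd_add_left (dvd_mul_right _ _)

namespace DHq

theorem fst_star (x : DHq) : (star x).fst = star x.fst := by
  change (inl (star x.fst) + inr (star x.snd) : DHq).fst = _
  simp

theorem snd_star (x : DHq) : (star x).snd = star x.snd := by
  change (inl (star x.fst) + inr (star x.snd) : DHq).snd = _
  simp

noncomputable instance : StarRing DHq where
  star_involutive x := by ext1 <;> simp [fst_star, snd_star]
  star_mul x y := by ext1 <;> simp [fst_star, snd_star, add_comm]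
  star_add x y := by ext1 <;> simp [fst_star, snd_star]

theorem mem_center_of_isSelfAdjoint (x : DHq) (hx : IsSelfAdjoint x) : x ∈ Set.center DHq := by
  have hfst : x.fst = x.fst.re := Quaternion.star_eq_self.mp (by rw [← fst_star, hx.star_eq])
  have hsnd : x.snd = x.snd.re := Quaternion.star_eq_self.mp (by rw [← snd_star, hx.star_eq])
  refine Semigroup.mem_center_iff.mpr fun y => TrivSqZeroExt.ext ?_ ?_
  · rw [fst_mul, fst_mul, hfst, Quaternion.coe_commutes]
  · rw [DualNumber.snd_mul, DualNumber.snd_mul, hfst, hsnd, Quaternion.coe_commutes,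
      Quaternion.coe_commutes, add_comm]

end DHq

section RealPolynomials

theorem dPoly_eq_map (f : ℝ[X]) : dPoly f = f.map (algebraMap ℝ DHq) := by
  rw [dPoly, dhQ, qPoly, Polynomial.map_map]
  rfl

theorem dPoly_one : dPoly 1 = 1 := by
  simp [dPoly_eq_map]

theorem dPoly_mul (f g : ℝ[X]) : dPoly (f * g) = dPoly f * dPoly g := by
  simp [dPoly_eq_map]

theorem monic_dPoly {f : ℝ[X]} (hf : f.Monic) : (dPoly f).Monic := by
  rw [dPoly_eq_map]
  exact hf.map _

theorem natDegree_dPoly (f : ℝ[X]) : (dPoly f).natDegree = f.natDegree := by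
  rw [dPoly_eq_map, natDegree_map_eq_of_injective (algebraMap ℝ DHq).injective]

theorem cstar_dPoly (f : ℝ[X]) : cstar (dPoly f) = dPoly f := by
  ext1 n
  rw [coeff_cstar, dPoly_eq_map, coeff_map]
  ext1 <;> simp [DHq.fst_star, DHq.snd_star, algebraMap_eq_inl']

theorem dvd_of_dPoly_dvd_dPoly {f g : ℝ[X]} (hf : f.Monic) (h : dPoly f ∣ dPoly g) : f ∣ g := by
  rw [← modByMonic_eq_zero_iff_dvd (monic_dPoly hf), dPoly_eq_map, dPoly_eq_map,
    ← map_modByMonic _ hf, Polynomial.map_eq_zero_iff (algebraMap ℝ DHq).injective] at h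
  exact (modByMonic_eq_zero_iff_dvd hf).mp h

end RealPolynomials

section Primal

theorem primal_add (A B : DHq[X]) : primal (A + B) = primal A + primal B :=
  Polynomial.map_add _

theorem primal_mul (A B : DHq[X]) : primal (A * B) = primal A * primal B :=
  Polynomial.map_mul _

theorem coeff_primal (A : DHq[X]) (n : ℕ) : (primal A).coeff n = (A.coeff n).fst :=
  coeff_map _ _

theorem natDegree_primal_le (A : DHq[X]) : (primal A).natDegree ≤ A.natDegree :=
  natDegree_map_le

theorem primal_normPoly (A : DHq[X]) : primal (normPoly A) = normPoly (primal A) := by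
  have primal_cstar : primal (cstar A) = cstar (primal A) := by
    ext1 n
    rw [coeff_primal, coeff_cstar, coeff_cstar, coeff_primal, DHq.fst_star]
  rw [normPoly, primal_mul, primal_cstar, normPoly]

theorem primal_dPoly (f : ℝ[X]) : primal (dPoly f) = qPoly f := by
  ext1 n
  simp [coeff_primal, dPoly, dhQ, qPoly]

theorem primal_mp (P D : Hq[X]) : primal (mp P D) = P := by
  ext1 n
  simp [coeff_primal, mp, dhQ]

theorem RDvdQ.mul_left {f : ℝ[X]} {A : Hq[X]} (h : RDvdQ f A) (B : Hq[X]) : RDvdQ f (B * A) := by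
  obtain ⟨Q, rfl⟩ := h
  exact ⟨B * Q, (commute_map_algebraMap f B).symm.left_comm Q⟩

end Primal

section LinearFactor

theorem exists_eq_X_sub_C_mul_C_of_dvd_normPoly {F : ℝ[X]} (hF : F.Monic) (hF2 : F.natDegree ≤ 2)
    {R : DHq[X]} (hdeg : R.natDegree < F.natDegree) (hR : primal R ≠ 0)
    (hdvd : dPoly F ∣ normPoly R) :
    ∃ h a : DHq, R = (X - C h) * C a ∧ normPoly (X - C h) = dPoly F := by
  have hle : F.natDegree ≤ 2 * (primal R).natDegree := by
    have hdvd' : qPoly F ∣ normPoly (primal R) := by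
      rw [← primal_dPoly, ← primal_normPoly]
      exact map_dvd (mapRingHom _) hdvd
    simpa [qPoly] using natDegree_le_of_dvd_normPoly hR hdvd'
  have hlt : (primal R).natDegree < F.natDegree := (natDegree_primal_le R).trans_lt hdeg
  have hunit : IsUnit (R.coeff 1) := by
    have hdeg1 : (primal R).natDegree = 1 := by omega
    rw [isUnit_iff_isUnit_fst, ← coeff_primal, ← hdeg1, coeff_natDegree]
    exact (leadingCoeff_ne_zero.mpr hR).isUnit
  obtain ⟨h, hRh⟩ := exists_eq_X_sub_C_mul_C (by omega) hunit
  refine ⟨h, _, hRh, ?_⟩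
  rw [hRh, normPoly_mul DHq.mem_center_of_isSelfAdjoint, normPoly_C,
    ((hunit.mul hunit.star).map C).dvd_mul_right] at hdvd
  refine (eq_of_monic_of_dvd_of_natDegree_eq (monic_dPoly hF)
    (monic_normPoly (monic_X_sub_C h)) hdvd ?_).symm
  rw [natDegree_dPoly, natDegree_normPoly (monic_X_sub_C h), natDegree_X_sub_C]
  omega

theorem exists_eq_X_sub_C_mul_of_irreducible {F : ℝ[X]} (hF : F.Monic) (hirr : Irreducible F)
    {M : DHq[X]} (hdvd : dPoly F ∣ normPoly M) (hprimal : ¬ RDvdQ F (primal M)) :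
    ∃ (h : DHq) (N : DHq[X]), M = (X - C h) * N ∧ normPoly (X - C h) = dPoly F := by
  obtain ⟨R, Q, hdeg, rfl⟩ : ∃ R Q, R.natDegree < F.natDegree ∧ R + dPoly F * Q = M := by
    refine ⟨M %ₘ dPoly F, M /ₘ dPoly F, ?_, modByMonic_add_div M _⟩
    rw [← natDegree_dPoly]
    refine natDegree_modByMonic_lt M (monic_dPoly hF) fun h => hirr.natDegree_pos.ne' ?_
    rw [← natDegree_dPoly, h, natDegree_one]
  rw [dvd_normPoly_add_mul_iff DHq.mem_center_of_isSelfAdjoint (cstar_dPoly F)] at hdvd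
  have hR : primal R ≠ 0 := fun hR =>
    hprimal ⟨primal Q, by rw [primal_add, primal_mul, primal_dPoly, hR, zero_add]⟩
  obtain ⟨h, a, hRh, hnorm⟩ :=
    exists_eq_X_sub_C_mul_C_of_dvd_normPoly hF hirr.natDegree_le_two hdeg hR hdvd
  refine ⟨h, C a + cstar (X - C h) * Q, ?_, hnorm⟩
  rw [mul_add, ← hRh, ← mul_assoc, ← normPoly, hnorm]

end LinearFactor

theorem HasLinFact.one : HasLinFact 1 :=
  ⟨[], by simp, by simp⟩

theorem HasLinFact.X_sub_C_mul {h : DHq} {M : DHq[X]} (hh : IsMotion (X - C h))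
    (hM : HasLinFact M) : HasLinFact ((X - C h) * M) := by
  obtain ⟨L, hL, rfl⟩ := hM
  exact ⟨h :: L, List.forall_mem_cons.mpr ⟨hh, hL⟩, by rw [List.map_cons, List.prod_cons]⟩

theorem IsMotion.of_mul_left {G : ℝ[X]} (hG : G.Monic) {A B : DHq[X]} (hA : normPoly A = dPoly G)
    (hAB : IsMotion (A * B)) : IsMotion B := by
  obtain ⟨f, hf, hnorm⟩ := hAB
  rw [← normPoly, normPoly_mul DHq.mem_center_of_isSelfAdjoint, hA] at hnorm
  obtain ⟨q, rfl⟩ := dvd_of_dPoly_dvd_dPoly hG (Dvd.intro _ hnorm)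
  rw [dPoly_mul] at hnorm
  exact ⟨q, right_ne_zero_of_mul hf, (monic_dPoly hG).isRegular.left hnorm⟩

theorem exists_hasLinFact_mul_eq {G : ℝ[X]} (hG : G.Monic) {M : DHq[X]}
    (hdvd : dPoly G ∣ normPoly M)
    (hGP : ∀ f : ℝ[X], f.Monic → f ∣ G → RDvdQ f (primal M) → f = 1) :
    ∃ M₁ M₂ : DHq[X], HasLinFact M₁ ∧ normPoly M₁ = dPoly G ∧ M = M₁ * M₂ := by
  induction hn : G.natDegree using Nat.strong_induction_on generalizing G M with
  | _ n ih =>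
  by_cases hunit : IsUnit G
  · refine ⟨1, M, HasLinFact.one, ?_, (one_mul M).symm⟩
    rw [hG.eq_one_of_isUnit hunit, normPoly_one, dPoly_one]
  obtain ⟨F, hF, hirr, G', rfl⟩ := exists_monic_irreducible_factor G hunit
  have hG' : G'.Monic := hF.of_mul_monic_left hG
  have hdeg : G'.natDegree < n := by
    rw [← hn, hF.natDegree_mul hG']
    exact Nat.lt_add_of_pos_left hirr.natDegree_pos
  rw [dPoly_mul] at hdvd
  obtain ⟨h, N, rfl, hnorm⟩ := exists_eq_X_sub_C_mul_of_irreducible hF hirr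
    (dvd_of_mul_right_dvd hdvd) fun hFM => hirr.ne_one (hGP F hF (dvd_mul_right F G') hFM)
  rw [normPoly_mul DHq.mem_center_of_isSelfAdjoint, hnorm,
    (monic_dPoly hF).isRegular.left.dvd_cancel_left] at hdvd
  have hG'N (f : ℝ[X]) (hf : f.Monic) (hfG' : f ∣ G') (hfN : RDvdQ f (primal N)) : f = 1 := by
    refine hGP f hf (hfG'.mul_left F) ?_
    rw [primal_mul]
    exact hfN.mul_left _
  obtain ⟨N₁, N₂, hfact, hnorm₁, rfl⟩ := ih _ hdeg hG' hdvd hG'N rfl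
  refine ⟨(X - C h) * N₁, N₂, hfact.X_sub_C_mul ⟨F, hF.ne_zero, hnorm⟩, ?_, (mul_assoc _ _ _).symm⟩
  rw [normPoly_mul DHq.mem_center_of_isSelfAdjoint, hnorm, hnorm₁, dPoly_mul]

theorem left_factor_with_norm_G_general (M : DHq[X]) (G : ℝ[X]) (hG : G.Monic)
    (hGdvd : RDvdD G (M * cstar M))
    (hGP : ∀ f : ℝ[X], f.Monic → f ∣ G → RDvdQ f (primal M) → f = 1) :
    ∃ M₁ M₂ : DHq[X], IsMotion M₁ ∧ (IsMotion M → IsMotion M₂) ∧ HasLinFact M₁ ∧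
      dPoly G = M₁ * cstar M₁ ∧ M = M₁ * M₂ := by
  obtain ⟨M₁, M₂, hfact, hnorm, rfl⟩ := exists_hasLinFact_mul_eq hG hGdvd hGP
  exact ⟨M₁, M₂, ⟨G, hG.ne_zero, hnorm⟩, IsMotion.of_mul_left hG hnorm, hfact, hnorm.symm, rfl⟩

/-- If `G` is a monic real divisor of `ν(M)` with `mrpf(G, P) = 1`, then `M` has a
left factor `M₁` with norm `G` admitting a factorization into monic linear motion
polynomial factors. -/
theorem left_factor_with_norm_G
    (P D : Hq[X]) (M : DHq[X]) (hM : M = mp P D)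
    (hmonic : M.Monic) (hmotion : IsMotion M)
    (G : ℝ[X]) (hG : G.Monic) (hGdvd : RDvdD G (M * cstar M))
    (hGP : ∀ f : ℝ[X], f.Monic → f ∣ G → RDvdQ f P → f = 1) :
    ∃ M₁ M₂ : DHq[X], IsMotion M₁ ∧ IsMotion M₂ ∧ HasLinFact M₁ ∧
      dPoly G = M₁ * cstar M₁ ∧ M = M₁ * M₂ := by
  subst hM
  obtain ⟨M₁, M₂, h₁, h₂, hrest⟩ :=
    left_factor_with_norm_G_general (mp P D) G hG hGdvd (by rwa [primal_mp])
  exact ⟨M₁, M₂, h₁, h₂ hmotion, hrest⟩
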